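/- arXiv:1909.05285 — 6 statements merged into one kernel-verified Lean document; each statement's English description precedes it below -/
import Mathlib

section
/- Let (Ω,Σ,μ) be an arbitrary measure space, let X be a closed linear subspace of L¹(μ), and let f be an extreme point of the closed unit ball B_X of X. Then for any sequences (gₙ) and (hₙ) in B_X such that ½(gₙ + hₙ) converges to f in norm, the sequence (gₙ) converges weakly to f, that is, Λ(gₙ) → Λ(f) for every continuous linear functional Λ on X. -/
open MeasureTheory Filter Topology

/-- Bounded sequences in a Hilbert space have weak limits along ultrafilters. -/
theorem aux_hilbert {H E : Type*} [NormedAddCommGroup H] [InnerProductSpace ℝ H] [CompleteSpace H]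
    [NormedAddCommGroup E] [NormedSpace ℝ E] (T : H →L[ℝ] E) (ψ : ℕ → H) (C : ℝ)
    (hψ : ∀ n, ‖ψ n‖ ≤ C) (U : Ultrafilter ℕ) :
    ∃ y : E, ∀ Λ : E →L[ℝ] ℝ, Tendsto (fun n => Λ (T (ψ n))) U (𝓝 (Λ y)) := by
  let F : ℕ → WeakDual ℝ H := fun n => StrongDual.toWeakDual (InnerProductSpace.toDual ℝ H (ψ n))
  have hK := WeakDual.isCompact_closedBall (𝕜 := ℝ) (E := H) 0 C
  obtain ⟨w, -, hw⟩ := hK.ultrafilter_le_nhds (U.map F) (by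
    rw [le_principal_iff]
    refine Filter.mem_map.2 (Filter.Eventually.of_forall fun n => ?_)
    simpa [F] using hψ n)
  have hw' : Tendsto F U (𝓝 w) := hw
  refine ⟨T ((InnerProductSpace.toDual ℝ H).symm (WeakDual.toStrongDual w)), fun Λ => ?_⟩
  have h1 := ((WeakDual.eval_continuous
    ((InnerProductSpace.toDual ℝ H).symm (Λ.comp T))).tendsto w).comp hw'
  have e1 : ∀ x : H, Λ (T x) = inner ℝ x ((InnerProductSpace.toDual ℝ H).symm (Λ.comp T)) := by
    intro x
    rw [real_inner_comm, InnerProductSpace.toDual_symm_apply]; rfl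
  rw [e1, InnerProductSpace.toDual_symm_apply]
  refine h1.congr fun n => ?_
  rw [e1]; rfl

/-- Closed convex sets are closed under weak limits. -/
theorem aux_closed {E : Type*} [NormedAddCommGroup E] [NormedSpace ℝ E] {K : Set E}
    (hc : Convex ℝ K) (hK : IsClosed K) {x : ℕ → E} (hx : ∀ n, x n ∈ K) (U : Ultrafilter ℕ)
    {y : E} (h : ∀ Λ : E →L[ℝ] ℝ, Tendsto (fun n => Λ (x n)) U (𝓝 (Λ y))) : y ∈ K := by
  by_contra hy
  obtain ⟨Λ, u, h1, h2⟩ := geometric_hahn_banach_point_closed hc hK hy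
  exact absurd (ge_of_tendsto' (h Λ) fun n => (h2 _ (hx n)).le) (not_le.2 h1)

theorem aux_real (a b : ℝ) :
    |a - max (min 0 (2*b)) (min (max 0 (2*b)) a)| = (|a| + |2*b - a| - 2*|b|)/2 ∧
    |max (min 0 (2*b)) (min (max 0 (2*b)) a)| ≤ 2 * |b| := by
  rcases le_total 0 b with hb | hb
  · have h2b : 0 ≤ 2 * b := by linarith
    rw [min_eq_left h2b, max_eq_right h2b, abs_of_nonneg hb]
    rcases le_total (2*b) a with h | h
    · rw [min_eq_left h, max_eq_right h2b, abs_of_nonneg (sub_nonneg.2 h),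
        abs_of_nonneg (h2b.trans h), abs_of_nonpos (sub_nonpos.2 h), abs_of_nonneg h2b]
      constructor <;> linarith
    · rw [min_eq_right h, abs_of_nonneg (sub_nonneg.2 h)]
      rcases le_total 0 a with ha | ha
      · rw [max_eq_right ha, abs_of_nonneg ha, sub_self, abs_zero]
        constructor <;> linarith
      · rw [max_eq_left ha, abs_zero, sub_zero, abs_of_nonpos ha]
        constructor <;> linarith
  · have h2b : 2 * b ≤ 0 := by linarith
    rw [min_eq_right h2b, max_eq_left h2b, abs_of_nonpos hb]
    rcases le_total 0 a with h | h
    · rw [min_eq_left h, max_eq_right h2b, sub_zero, abs_of_nonneg h, abs_zero,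
        abs_of_nonpos (by linarith)]
      constructor <;> linarith
    · rw [min_eq_right h, abs_of_nonpos h]
      rcases le_total (2*b) a with ha | ha
      · rw [max_eq_right ha, abs_of_nonpos h, sub_self, abs_zero, abs_of_nonpos (by linarith)]
        constructor <;> linarith
      · rw [max_eq_left ha, abs_of_nonpos (sub_nonpos.2 ha), abs_of_nonneg (sub_nonneg.2 ha),
          abs_of_nonpos h2b]
        constructor <;> linarith

theorem aux_L1 {Ω : Type*} [MeasurableSpace Ω] (μ : Measure Ω) (f : Lp ℝ 1 μ) :
    ∃ (T : Lp ℝ 2 μ →L[ℝ] Lp ℝ 1 μ) (C : ℝ), ∀ g : Lp ℝ 1 μ, ∃ ψ : Lp ℝ 2 μ, ‖ψ‖ ≤ C ∧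
      ‖g - T ψ‖ = (‖g‖ + ‖(2:ℝ) • f - g‖ - 2 * ‖f‖) / 2 := by
  have hfi : Integrable f μ := L1.integrable_coeFn f
  have hsm : MemLp (fun x => Real.sqrt |f x|) 2 μ := by
    rw [memLp_two_iff_integrable_sq]
    · exact hfi.abs.congr (Eventually.of_forall fun x => (Real.sq_sqrt (abs_nonneg _)).symm)
    · exact (Real.continuous_sqrt.comp continuous_abs).comp_aestronglyMeasurable hfi.1
  let s : Lp ℝ 2 μ := hsm.toLp
  have hs : s =ᵐ[μ] fun x => Real.sqrt |f x| := hsm.coeFn_toLp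
  refine ⟨(ContinuousLinearMap.mul ℝ ℝ).holderL μ 2 2 1 s, 2 * ‖s‖, fun g => ?_⟩
  let P : ℝ → ℝ → ℝ := fun a b => max (min 0 (2*b)) (min (max 0 (2*b)) a)
  let p : Ω → ℝ := fun x => P (g x) (f x) / Real.sqrt |f x|
  have hb : ∀ x, ‖p x‖ ≤ 2 * ‖Real.sqrt |f x|‖ := by
    intro x
    have h2 := (aux_real (g x) (f x)).2
    simp only [p, norm_div, Real.norm_eq_abs, abs_of_nonneg (Real.sqrt_nonneg _)]
    refine div_le_of_le_mul₀ (Real.sqrt_nonneg _) (by positivity) ?_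
    rw [mul_assoc, Real.mul_self_sqrt (abs_nonneg _)]
    exact h2
  have hmul : ∀ x, Real.sqrt |f x| * p x = P (g x) (f x) := by
    intro x
    by_cases h0 : f x = 0
    · simp [P, h0]
    · have : Real.sqrt |f x| ≠ 0 := (Real.sqrt_pos.2 (abs_pos.2 h0)).ne'
      simp only [p]; field_simp
  have hgm : AEMeasurable g μ := (L1.integrable_coeFn g).1.aemeasurable
  have hfm : AEMeasurable f μ := hfi.1.aemeasurable
  have hpm : AEStronglyMeasurable p μ := by
    apply AEMeasurable.aestronglyMeasurable
    simp only [p, P]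
    fun_prop
  have hp : MemLp p 2 μ := hsm.of_le_mul hpm (Eventually.of_forall hb)
  refine ⟨hp.toLp, ?_, ?_⟩
  · apply Lp.norm_le_mul_norm_of_ae_le_mul
    filter_upwards [hp.coeFn_toLp, hs] with x h1 h2
    rw [h1, h2]; exact hb x
  · rw [ContinuousLinearMap.holderL_apply_apply]
    have hgi := L1.integrable_coeFn g
    have hki := L1.integrable_coeFn ((2:ℝ) • f - g)
    rw [L1.norm_eq_integral_norm, L1.norm_eq_integral_norm g, L1.norm_eq_integral_norm f,
      L1.norm_eq_integral_norm ((2:ℝ) • f - g), ← integral_const_mul, ← integral_add hgi.norm hki.norm,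
      ← integral_sub (f := fun a => ‖g a‖ + ‖((2:ℝ) • f - g : Lp ℝ 1 μ) a‖)
        (hgi.norm.add hki.norm) (hfi.norm.const_mul 2), ← integral_div]
    apply integral_congr_ae
    filter_upwards [hp.coeFn_toLp, hs, Lp.coeFn_sub g
      ((ContinuousLinearMap.mul ℝ ℝ).holder 1 s hp.toLp),
      (ContinuousLinearMap.mul ℝ ℝ).coeFn_holder (r := 1) s hp.toLp,
      Lp.coeFn_sub ((2:ℝ) • f) g, Lp.coeFn_smul (2:ℝ) f] with x h1 h2 h3 h4 h5 h6
    rw [h3, Pi.sub_apply, h4, h5, Pi.sub_apply, h6, h1, h2]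
    simp only [ContinuousLinearMap.mul_apply', hmul, Pi.smul_apply, smul_eq_mul, Real.norm_eq_abs]
    exact (aux_real (g x) (f x)).1

theorem aux_extreme {X : Type*} [NormedAddCommGroup X] [NormedSpace ℝ X] {f : X}
    (hf : f ∈ Set.extremePoints ℝ (Metric.closedBall (0 : X) 1)) (h1 : ‖f‖ ≠ 1) (v : X) :
    v = 0 := by
  have hle : ‖f‖ ≤ 1 := by simpa using hf.1
  have hlt : 0 < 1 - ‖f‖ := by
    have := lt_of_le_of_ne hle h1
    linarith
  by_contra hv
  have hvp : 0 < ‖v‖ := norm_pos_iff.2 hv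
  set c : ℝ := (1 - ‖f‖) / ‖v‖
  have hc : 0 < c := div_pos hlt hvp
  have hcv : ‖c • v‖ = 1 - ‖f‖ := by
    rw [norm_smul, Real.norm_of_nonneg hc.le]; simp only [c]; field_simp
  have := hf.2 (x₁ := f + c • v) (by
      have := norm_add_le f (c • v)
      simp only [mem_closedBall_zero_iff]; linarith) (x₂ := f - c • v) (by
      have := norm_sub_le f (c • v)
      simp only [mem_closedBall_zero_iff]; linarith)
      ⟨1/2, 1/2, by norm_num, by norm_num, by norm_num, by module⟩
  have h0 : c • v = 0 := by simpa using this
  rw [h0, norm_zero] at hcv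
  linarith

/-- If `f` is an extreme point of the closed unit ball of a closed subspace `X` of `L¹(μ)`,
and `(gₙ)`, `(hₙ)` are sequences in the unit ball with `½(gₙ + hₙ) → f` in norm, then
`(gₙ)` converges weakly to `f`. -/
theorem weak_convergence_of_midpoint_tendsto_extremePoint_L1
    {Ω : Type*} [MeasurableSpace Ω] (μ : Measure Ω)
    (X : Submodule ℝ (Lp ℝ 1 μ)) (hX : IsClosed (X : Set (Lp ℝ 1 μ)))
    (f : X) (hf : f ∈ Set.extremePoints ℝ (Metric.closedBall (0 : X) 1))
    (g h : ℕ → X)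
    (hg : ∀ n, g n ∈ Metric.closedBall (0 : X) 1)
    (hh : ∀ n, h n ∈ Metric.closedBall (0 : X) 1)
    (hmid : Tendsto (fun n => (1 / 2 : ℝ) • (g n + h n)) atTop (𝓝 f)) :
    ∀ Λ : X →L[ℝ] ℝ, Tendsto (fun n => Λ (g n)) atTop (𝓝 (Λ f)) := by
  intro Λ
  by_cases h1 : ‖f‖ = 1
  swap
  · have hz := aux_extreme hf h1
    simp only [hz (g _), hz f]
    exact tendsto_const_nhds
  rw [tendsto_iff_ultrafilter]
  intro U hU
  obtain ⟨T, C, hT⟩ := aux_L1 μ (f : Lp ℝ 1 μ)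
  choose ψ hψC hψ using fun n => hT (g n)
  obtain ⟨y, hy⟩ := aux_hilbert T ψ C hψC U
  have hg' : ∀ n, ‖(g n : Lp ℝ 1 μ)‖ ≤ 1 := fun n => by simpa using hg n
  have hh' : ∀ n, ‖(h n : Lp ℝ 1 μ)‖ ≤ 1 := fun n => by simpa using hh n
  have hf' : ‖(f : Lp ℝ 1 μ)‖ = 1 := h1
  -- the defect tends to zero
  have hd : Tendsto (fun n => (2:ℝ) • (f : Lp ℝ 1 μ) - g n - h n) atTop (𝓝 0) := by
    have h2 : Tendsto (fun n => (((1 / 2 : ℝ) • (g n + h n) : X) : Lp ℝ 1 μ)) atTop (𝓝 f) :=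
      (continuous_subtype_val.tendsto f).comp hmid
    have h3 := (tendsto_const_nhds (x := (f : Lp ℝ 1 μ))).sub h2 |>.const_smul (2:ℝ)
    rw [sub_self, smul_zero] at h3
    refine h3.congr fun n => ?_
    push_cast
    module
  have he : Tendsto (fun n => (g n : Lp ℝ 1 μ) - T (ψ n)) atTop (𝓝 0) := by
    refine squeeze_zero_norm (fun n => ?_) (by simpa using hd.norm)
    rw [hψ n, hf']
    have e : (2:ℝ) • (f : Lp ℝ 1 μ) - g n = ((2:ℝ) • (f : Lp ℝ 1 μ) - g n - h n) + h n := by abel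
    have h4 := norm_add_le ((2:ℝ) • (f : Lp ℝ 1 μ) - g n - h n) (h n)
    rw [← e] at h4
    have := hg' n
    have := hh' n
    have := norm_nonneg ((2:ℝ) • (f : Lp ℝ 1 μ) - g n - h n)
    linarith
  have hgy : ∀ L : Lp ℝ 1 μ →L[ℝ] ℝ, Tendsto (fun n => L (g n)) U (𝓝 (L y)) := by
    intro L
    have h5 := (hy L).add (((L.continuous.tendsto 0).comp he).mono_left hU)
    rw [map_zero, add_zero] at h5
    refine h5.congr fun n => ?_
    simp
  have hhy : ∀ L : Lp ℝ 1 μ →L[ℝ] ℝ,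
      Tendsto (fun n => L (h n)) U (𝓝 (L ((2:ℝ) • (f : Lp ℝ 1 μ) - y))) := by
    intro L
    have h5 := ((tendsto_const_nhds (x := L ((2:ℝ) • (f : Lp ℝ 1 μ)))).sub (hgy L)).sub
      (((L.continuous.tendsto 0).comp hd).mono_left hU)
    rw [map_zero, sub_zero, ← map_sub] at h5
    refine h5.congr fun n => ?_
    simp
  have hKc : Convex ℝ ((X : Set (Lp ℝ 1 μ)) ∩ Metric.closedBall 0 1) :=
    X.convex.inter (convex_closedBall _ _)
  have hKcl : IsClosed ((X : Set (Lp ℝ 1 μ)) ∩ Metric.closedBall 0 1) :=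
    hX.inter Metric.isClosed_closedBall
  have hyK := aux_closed hKc hKcl (fun n => ⟨(g n).2, by simpa using hg n⟩) U hgy
  have hzK := aux_closed hKc hKcl (fun n => ⟨(h n).2, by simpa using hh n⟩) U hhy
  have key := hf.2 (x₁ := ⟨y, hyK.1⟩) (by simpa using hyK.2)
    (x₂ := ⟨_, hzK.1⟩) (by simpa using hzK.2)
    ⟨1/2, 1/2, by norm_num, by norm_num, by norm_num, by
      apply Subtype.ext
      push_cast
      module⟩
  have hyf : y = f := congrArg Subtype.val key
  obtain ⟨L, hL, -⟩ := exists_extension_norm_eq X Λ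
  have := hgy L
  rw [hyf, hL f] at this
  exact this.congr fun n => hL (g n)
end

section
/- Let μ be a probability measure, let X be a closed linear subspace of L¹(μ), and let f be an extreme point of the closed unit ball of X. Suppose (gₙ) and (hₙ) are sequences in X with gₙ + hₙ = 2f for every n, ‖gₙ‖₁ → 1 and ‖hₙ‖₁ → 1. Then the family {gₙ : n ∈ ℕ} is equi-integrable: for every ε > 0 there exists δ > 0 such that ∫_A |gₙ| dμ ≤ ε for every n and every measurable set A with μ(A) ≤ δ. -/
open MeasureTheory Filter Topology

lemma abs_cont_aux {Ω : Type*} [MeasurableSpace Ω] (μ : Measure Ω) (φ : Ω → ℝ)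
    (hφ : Integrable φ μ) (h0 : ∀ a, 0 ≤ φ a) (ε : ℝ) (hε : 0 < ε) :
    ∃ δ > (0 : ℝ), ∀ A : Set Ω, μ A ≤ ENNReal.ofReal δ → ∫ a in A, φ a ∂μ ≤ ε := by
  have hfin : ∫⁻ a, ENNReal.ofReal (φ a) ∂μ ≠ ⊤ := by
    rw [← ofReal_integral_eq_lintegral_ofReal hφ (ae_of_all _ h0)]
    exact ENNReal.ofReal_ne_top
  obtain ⟨δ, hδ, H⟩ := exists_pos_setLIntegral_lt_of_measure_lt hfin
    (ε := ENNReal.ofReal ε) (by simpa using hε)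
  obtain ⟨r, hr0, hr1, hr2⟩ := ENNReal.lt_iff_exists_real_btwn.1 hδ
  refine ⟨r, by simpa using hr1, fun A hA => ?_⟩
  have := H A (hA.trans_lt hr2)
  rw [← ofReal_integral_eq_lintegral_ofReal hφ.integrableOn (ae_of_all _ h0)] at this
  exact ((ENNReal.ofReal_lt_ofReal_iff hε).1 this).le

lemma norm_extreme_aux {E : Type*} [NormedAddCommGroup E] [NormedSpace ℝ E] (f x : E)
    (hf : f ∈ Set.extremePoints ℝ (Metric.closedBall (0 : E) 1)) (hx : x ≠ 0) : 1 ≤ ‖f‖ := by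
  by_contra! hlt
  have hx' : 0 < ‖x‖ := norm_pos_iff.2 hx
  set t : ℝ := (1 - ‖f‖) / ‖x‖ with ht
  have htp : 0 < t := div_pos (by linarith) hx'
  have hn : ‖t • x‖ = 1 - ‖f‖ := by
    rw [norm_smul, Real.norm_of_nonneg htp.le, ht, div_mul_cancel₀ _ hx'.ne']
  have h1 : f + t • x ∈ Metric.closedBall (0 : E) 1 := by
    rw [mem_closedBall_zero_iff]; linarith [norm_add_le f (t • x)]
  have h2 : f - t • x ∈ Metric.closedBall (0 : E) 1 := by
    rw [mem_closedBall_zero_iff]; linarith [norm_sub_le f (t • x)]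
  have h3 : f ∈ openSegment ℝ (f + t • x) (f - t • x) :=
    ⟨1 / 2, 1 / 2, by norm_num, by norm_num, by norm_num, by module⟩
  have h4 := hf.2 h1 h2 h3
  have h5 : t • x = 0 := by simpa using h4
  rw [h5, norm_zero] at hn
  linarith

/-- Let `μ` be a probability measure, `X` a closed subspace of `L¹(μ)`, and `f` an extreme
point of the closed unit ball of `X`. If `gₙ + hₙ = 2f` with `‖gₙ‖₁ → 1` and `‖hₙ‖₁ → 1`,
then the family `{gₙ}` is equi-integrable. -/
theorem equiIntegrable_of_extremePoint_L1
    {Ω : Type*} [MeasurableSpace Ω] (μ : Measure Ω) [IsProbabilityMeasure μ]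
    (X : Submodule ℝ (Lp ℝ 1 μ)) (hX : IsClosed (X : Set (Lp ℝ 1 μ)))
    (f : X) (hf : f ∈ Set.extremePoints ℝ (Metric.closedBall (0 : X) 1))
    (g h : ℕ → X)
    (hsum : ∀ n, g n + h n = (2 : ℝ) • f)
    (hg : Tendsto (fun n => ‖g n‖) atTop (𝓝 1))
    (hh : Tendsto (fun n => ‖h n‖) atTop (𝓝 1)) :
    ∀ ε > (0 : ℝ), ∃ δ > (0 : ℝ), ∀ n, ∀ A : Set Ω, MeasurableSet A →
      μ A ≤ ENNReal.ofReal δ →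
      ∫ a in A, |((g n : Lp ℝ 1 μ) : Ω → ℝ) a| ∂μ ≤ ε := by
  intro ε hε
  have hf1 : 1 ≤ ‖f‖ := by
    obtain ⟨n, hn⟩ := (hg.eventually (lt_mem_nhds (zero_lt_one (α := ℝ)))).exists
    exact norm_extreme_aux f (g n) hf (norm_pos_iff.1 hn)
  have hI : ∀ x : X, Integrable (fun a => |((x : Lp ℝ 1 μ) : Ω → ℝ) a|) μ := fun x =>
    (L1.integrable_coeFn (x : Lp ℝ 1 μ)).abs
  have hN : ∀ x : X, ‖x‖ = ∫ a, |((x : Lp ℝ 1 μ) : Ω → ℝ) a| ∂μ := fun x => by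
    rw [Submodule.coe_norm, L1.norm_eq_integral_norm]; rfl
  have hlim : Tendsto (fun n => (‖g n‖ + ‖h n‖) / 2) atTop (𝓝 1) := by
    simpa using (hg.add hh).div_const 2
  obtain ⟨N, hNN⟩ := eventually_atTop.1
    (hlim.eventually (gt_mem_nhds (show (1 : ℝ) < 1 + ε / 2 by linarith)))
  obtain ⟨δ, hδ, H⟩ := abs_cont_aux μ
    (fun a => 2 * |((f : Lp ℝ 1 μ) : Ω → ℝ) a|
      + ∑ n ∈ Finset.range N, |((g n : Lp ℝ 1 μ) : Ω → ℝ) a|)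
    (((hI f).const_mul 2).add (integrable_finsetSum _ fun n _ => hI (g n)))
    (fun a => by positivity) (ε / 2) (by linarith)
  refine ⟨δ, hδ, fun n A hA hμ => ?_⟩
  have hφI : Integrable (fun a => 2 * |((f : Lp ℝ 1 μ) : Ω → ℝ) a|
      + ∑ n ∈ Finset.range N, |((g n : Lp ℝ 1 μ) : Ω → ℝ) a|) μ :=
    ((hI f).const_mul 2).add (integrable_finsetSum _ fun n _ => hI (g n))
  have HA := H A hμ
  by_cases hn : n < N
  · refine le_trans (setIntegral_mono (hI (g n)).integrableOn hφI.integrableOn fun a => ?_)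
      (HA.trans (by linarith))
    have := Finset.single_le_sum (f := fun n => |((g n : Lp ℝ 1 μ) : Ω → ℝ) a|)
      (fun i _ => abs_nonneg _) (Finset.mem_range.2 hn)
    have h2 := abs_nonneg (((f : Lp ℝ 1 μ) : Ω → ℝ) a)
    dsimp only at this ⊢
    linarith
  · have hae : ∀ᵐ a ∂μ, ((g n : Lp ℝ 1 μ) : Ω → ℝ) a + ((h n : Lp ℝ 1 μ) : Ω → ℝ) a
        = 2 * ((f : Lp ℝ 1 μ) : Ω → ℝ) a := by
      have e : (g n : Lp ℝ 1 μ) + (h n : Lp ℝ 1 μ) = (2 : ℝ) • (f : Lp ℝ 1 μ) := by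
        simpa using congrArg (Subtype.val) (hsum n)
      have e1 := Lp.coeFn_add (g n : Lp ℝ 1 μ) (h n : Lp ℝ 1 μ)
      have e2 := Lp.coeFn_smul (2 : ℝ) (f : Lp ℝ 1 μ)
      rw [e] at e1
      filter_upwards [e1, e2] with a h1 h2
      rw [h1] at h2
      simpa using h2
    let ψ : Ω → ℝ := fun a => (|((g n : Lp ℝ 1 μ) : Ω → ℝ) a|
      + |((h n : Lp ℝ 1 μ) : Ω → ℝ) a|) / 2 - |((f : Lp ℝ 1 μ) : Ω → ℝ) a|
    have hψI : Integrable ψ μ := (((hI (g n)).add (hI (h n))).div_const 2).sub (hI f)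
    have hψ0 : 0 ≤ᵐ[μ] ψ := by
      filter_upwards [hae] with a ha
      have := abs_add_le (((g n : Lp ℝ 1 μ) : Ω → ℝ) a) (((h n : Lp ℝ 1 μ) : Ω → ℝ) a)
      rw [ha, abs_mul, abs_two] at this
      simp only [ψ, Pi.zero_apply]
      linarith
    have hψ : ∫ a, ψ a ∂μ = (‖g n‖ + ‖h n‖) / 2 - ‖f‖ := by
      simp only [ψ]
      have hs : Integrable (fun a => (|((g n : Lp ℝ 1 μ) : Ω → ℝ) a|
          + |((h n : Lp ℝ 1 μ) : Ω → ℝ) a|) / 2) μ := ((hI (g n)).add (hI (h n))).div_const 2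
      rw [integral_sub hs (hI f), integral_div,
        integral_add (hI (g n)) (hI (h n)), hN, hN, hN]
    have hψA : ∫ a in A, ψ a ∂μ ≤ ε / 2 := by
      have := setIntegral_le_integral (s := A) hψI hψ0
      have := hNN n (not_lt.1 hn)
      linarith
    have key : ∫ a in A, |((g n : Lp ℝ 1 μ) : Ω → ℝ) a| ∂μ ≤
        ∫ a in A, ((2 * |((f : Lp ℝ 1 μ) : Ω → ℝ) a|
      + ∑ n ∈ Finset.range N, |((g n : Lp ℝ 1 μ) : Ω → ℝ) a|) + ψ a) ∂μ := by
      refine setIntegral_mono_ae (hI (g n)).integrableOn (hφI.add hψI).integrableOn ?_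
      filter_upwards [hae] with a ha
      have h1 := abs_sub (((g n : Lp ℝ 1 μ) : Ω → ℝ) a + ((h n : Lp ℝ 1 μ) : Ω → ℝ) a)
        (((h n : Lp ℝ 1 μ) : Ω → ℝ) a)
      rw [add_sub_cancel_right, ha, abs_mul, abs_two] at h1
      have h2 : 0 ≤ ∑ n ∈ Finset.range N, |((g n : Lp ℝ 1 μ) : Ω → ℝ) a| := by positivity
      simp only [ψ]
      linarith
    rw [integral_add hφI.integrableOn hψI.integrableOn] at key
    linarith
end

section
/- Let u = (uᵢ) and v = (vᵢ) be elements of ℓ₁ (real absolutely summable sequences indexed by ℕ), and let φ : ℝ → ℝ be twice continuously differentiable with compact support. Then ∫_ℝ ‖u − t v‖₁ · φ''(t) dt = Σ_{i : vᵢ ≠ 0} 2|vᵢ| · φ(uᵢ/vᵢ). In other words, the second distributional derivative of the map t ↦ ‖u − tv‖₁ is the discrete measure Σ_{i : vᵢ ≠ 0} 2|vᵢ| δ_{uᵢ/vᵢ}, concentrated on the countable set {uᵢ/vᵢ : i ∈ ℕ, vᵢ ≠ 0}. -/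
open MeasureTheory Filter Topology in
theorem aux_abs (φ : ℝ → ℝ) (hφ : ContDiff ℝ 2 φ) (hφc : HasCompactSupport φ) (c : ℝ) :
    ∫ t : ℝ, |t - c| * deriv (deriv φ) t = 2 * φ c := by
  have h1 : ContDiff ℝ 1 (deriv φ) := ContDiff.deriv' hφ
  have h2 : Continuous (deriv (deriv φ)) := h1.continuous_deriv le_rfl
  have c1 : HasCompactSupport (deriv φ) := hφc.deriv
  have c2 : HasCompactSupport (deriv (deriv φ)) := c1.deriv
  have hG : ∀ t, HasDerivAt (fun t => (t - c) * deriv φ t - φ t) ((t - c) * deriv (deriv φ) t) t := by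
    intro t
    have a1 := ((hφ.differentiable (by norm_num)) t).hasDerivAt
    have a2 := ((h1.differentiable (by norm_num)) t).hasDerivAt
    exact ((((hasDerivAt_id' t).sub_const c).mul a2).sub a1).congr_deriv (by ring)
  have cG : HasCompactSupport (fun t => (t - c) * deriv φ t - φ t) :=
    HasCompactSupport.sub (c1.mul_left) hφc
  have contG : Continuous (fun t => (t - c) * deriv φ t - φ t) :=
    continuous_iff_continuousAt.2 fun t => (hG t).continuousAt
  have lim := cG.is_zero_at_infty
  have limT : Tendsto (fun t => (t - c) * deriv φ t - φ t) atTop (𝓝 0) :=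
    lim.mono_left atTop_le_cocompact
  have limB : Tendsto (fun t => (t - c) * deriv φ t - φ t) atBot (𝓝 0) :=
    lim.mono_left atBot_le_cocompact
  have iG : Integrable (fun t => (t - c) * deriv (deriv φ) t) :=
    Continuous.integrable_of_hasCompactSupport (by fun_prop) c2.mul_left
  have iA : Integrable (fun t => |t - c| * deriv (deriv φ) t) :=
    Continuous.integrable_of_hasCompactSupport (by fun_prop) c2.mul_left
  rw [← intervalIntegral.integral_Iic_add_Ioi (b := c) iA.integrableOn iA.integrableOn]
  have e1 : ∫ t in Set.Ioi c, |t - c| * deriv (deriv φ) t = φ c := by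
    rw [setIntegral_congr_fun (g := fun t => (t - c) * deriv (deriv φ) t) measurableSet_Ioi]
    · rw [integral_Ioi_of_hasDerivAt_of_tendsto' (fun t _ => hG t) iG.integrableOn limT]
      simp
    · intro t ht
      simp only [Set.mem_Ioi] at ht
      simp only [abs_of_pos (sub_pos.2 ht)]
  have e2 : ∫ t in Set.Iic c, |t - c| * deriv (deriv φ) t = φ c := by
    rw [setIntegral_congr_fun (g := fun t => -((t - c) * deriv (deriv φ) t)) measurableSet_Iic]
    · rw [integral_neg, integral_Iic_of_hasDerivAt_of_tendsto' (fun t _ => hG t) iG.integrableOn limB]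
      simp
    · intro t ht
      simp only [Set.mem_Iic] at ht
      simp only [abs_of_nonpos (sub_nonpos.2 ht)]
      ring
  rw [e1, e2]; ring

open MeasureTheory Filter Topology in
theorem aux_coord (φ : ℝ → ℝ) (hφ : ContDiff ℝ 2 φ) (hφc : HasCompactSupport φ) (a b : ℝ) :
    ∫ t : ℝ, |a - t * b| * deriv (deriv φ) t = 2 * |b| * φ (a / b) := by
  have h1 : ContDiff ℝ 1 (deriv φ) := ContDiff.deriv' hφ
  have h2 : Continuous (deriv (deriv φ)) := h1.continuous_deriv le_rfl
  have c1 : HasCompactSupport (deriv φ) := hφc.deriv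
  rcases eq_or_ne b 0 with rfl | hb
  · have : ∫ t : ℝ, deriv (deriv φ) t = 0 :=
      integral_eq_zero_of_hasDerivAt_of_integrable
        (fun t => ((h1.differentiable (by norm_num)) t).hasDerivAt)
        (h2.integrable_of_hasCompactSupport c1.deriv)
        (h1.continuous.integrable_of_hasCompactSupport c1)
    simp [integral_const_mul, this]
  · have : ∀ t : ℝ, |a - t * b| * deriv (deriv φ) t
        = |b| * (|t - a / b| * deriv (deriv φ) t) := by
      intro t
      rw [← mul_assoc, ← abs_mul, abs_sub_comm]
      congr 2
      field_simp
    simp_rw [this]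
    rw [integral_const_mul, aux_abs φ hφ hφc]
    ring

open MeasureTheory in
/-- For `u, v ∈ ℓ₁(ℕ)` and a `C²` test function `φ`, the second distributional derivative
of `t ↦ ‖u − t v‖₁` is the discrete measure `Σ_{i} 2|vᵢ| δ_{uᵢ/vᵢ}` (terms with `vᵢ = 0`
vanish): `∫ ‖u − t v‖₁ φ''(t) dt = Σᵢ 2|vᵢ| φ(uᵢ/vᵢ)`. -/
theorem secondDeriv_distributional_norm_sub_smul_l1
    (u v : lp (fun _ : ℕ => ℝ) 1)
    (φ : ℝ → ℝ) (hφ : ContDiff ℝ 2 φ) (hφc : HasCompactSupport φ) :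
    ∫ t : ℝ, ‖u - t • v‖ * deriv (deriv φ) t =
      ∑' i : ℕ, 2 * |v i| * φ (u i / v i) := by
  have h1 : ContDiff ℝ 1 (deriv φ) := ContDiff.deriv' hφ
  have h2 : Continuous (deriv (deriv φ)) := h1.continuous_deriv le_rfl
  have c2 : HasCompactSupport (deriv (deriv φ)) := hφc.deriv.deriv
  have hs : ∀ w : lp (fun _ : ℕ => ℝ) 1, Summable fun i => |w i| := by
    intro w
    have := (lp.memℓp w).summable (by norm_num)
    simpa using this
  have hn : ∀ t : ℝ, ‖u - t • v‖ * deriv (deriv φ) t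
      = ∑' i, |u i - t * v i| * deriv (deriv φ) t := by
    intro t
    rw [lp.norm_eq_tsum_rpow (by norm_num), tsum_mul_right]
    simp
    left
    rfl
  simp_rw [hn, ← aux_coord φ hφ hφc]
  have int : ∀ i, Integrable (fun t : ℝ => |u i - t * v i| * deriv (deriv φ) t) := fun i =>
    Continuous.integrable_of_hasCompactSupport (by fun_prop) c2.mul_left
  have i0 : Integrable (fun t : ℝ => |deriv (deriv φ) t|) :=
    (h2.integrable_of_hasCompactSupport c2).abs
  have i1 : Integrable (fun t : ℝ => |t| * |deriv (deriv φ) t|) :=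
    Continuous.integrable_of_hasCompactSupport (by fun_prop)
      (HasCompactSupport.mul_left (c2.comp_left (g := fun x => |x|) abs_zero))
  symm
  apply integral_tsum_of_summable_integral_norm int
  refine Summable.of_nonneg_of_le (fun i => integral_nonneg fun t => norm_nonneg _) (fun i => ?_)
    (((hs u).mul_right (∫ t : ℝ, |deriv (deriv φ) t|)).add
      ((hs v).mul_right (∫ t : ℝ, |t| * |deriv (deriv φ) t|)))
  rw [← integral_const_mul, ← integral_const_mul, ← integral_add (i0.const_mul _) (i1.const_mul _)]
  refine integral_mono (int i).norm ((i0.const_mul _).add (i1.const_mul _)) fun t => ?_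
  simp only [norm_mul, Real.norm_eq_abs, abs_abs]
  have := abs_sub (u i) (t * v i)
  rw [abs_mul] at this
  nlinarith [mul_le_mul_of_nonneg_right this (abs_nonneg (deriv (deriv φ) t))]
end

section
/- Let Γ be any index set, let b > 0, let f : [0,b] → ℝ be Lebesgue-integrable, and let K ≥ 0, c ≥ 0 be constants. Suppose there exist u, v ∈ ℓ₁(Γ) such that ‖u − t v‖₁ = ∫_0^b |f(s) − t| ds + K + c|t| for every t ∈ ℝ. Then f is essentially countably valued: there exists a countable set D ⊆ ℝ such that λ({s ∈ [0,b] : f(s) ∉ D}) = 0. -/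
open MeasureTheory Filter Topology Set in
theorem aux_tendsto (μ : Measure ℝ) [IsFiniteMeasure μ] (hμ : Integrable (fun x : ℝ => x) μ)
    (t : ℝ) :
    Tendsto (fun n : ℕ => ((n : ℝ) + 1) *
        ((∫ x, |x - (t + 1 / ((n : ℝ) + 1))| ∂μ) - ∫ x, |x - t| ∂μ)) atTop
      (𝓝 (2 * μ.real (Iic t) - μ.real univ)) := by
  have hi : ∀ a : ℝ, Integrable (fun x : ℝ => |x - a|) μ := fun a =>
    (hμ.sub (integrable_const a)).abs
  have h1 : (2 * μ.real (Iic t) - μ.real univ)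
      = ∫ x, (2 * (Iic t).indicator (fun _ => (1 : ℝ)) x - 1) ∂μ := by
    rw [integral_sub, integral_const_mul, integral_indicator_const _ measurableSet_Iic]
    · simp
    · exact ((integrable_const (1 : ℝ)).indicator measurableSet_Iic).const_mul 2
    · exact integrable_const _
  have h2 : ∀ n : ℕ, ((n : ℝ) + 1) *
        ((∫ x, |x - (t + 1 / ((n : ℝ) + 1))| ∂μ) - ∫ x, |x - t| ∂μ)
      = ∫ x, ((n : ℝ) + 1) * (|x - (t + 1 / ((n : ℝ) + 1))| - |x - t|) ∂μ := by
    intro n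
    rw [integral_const_mul, integral_sub (hi _) (hi _)]
  rw [h1]
  simp_rw [h2]
  refine tendsto_integral_of_dominated_convergence (fun _ => (1 : ℝ)) ?_ (integrable_const _) ?_ ?_
  · intro n
    exact (((hi _).sub (hi _)).const_mul _).aestronglyMeasurable
  · intro n
    refine Eventually.of_forall fun x => ?_
    have hn : (0 : ℝ) < (n : ℝ) + 1 := by positivity
    have h3 : |(|x - (t + 1 / ((n : ℝ) + 1))| - |x - t|)| ≤ 1 / ((n : ℝ) + 1) := by
      refine (abs_abs_sub_abs_le _ _).trans ?_
      rw [show x - (t + 1 / ((n : ℝ) + 1)) - (x - t) = -(1 / ((n : ℝ) + 1)) by ring, abs_neg,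
        abs_of_pos (by positivity)]
    rw [Real.norm_eq_abs, abs_mul, abs_of_pos hn]
    calc ((n : ℝ) + 1) * |(|x - (t + 1 / ((n : ℝ) + 1))| - |x - t|)|
        ≤ ((n : ℝ) + 1) * (1 / ((n : ℝ) + 1)) := by gcongr
      _ = 1 := by field_simp
  · refine Eventually.of_forall fun x => ?_
    rcases le_or_gt x t with hx | hx
    · refine tendsto_const_nhds.congr' (Eventually.of_forall fun n => ?_)
      have hn : (0 : ℝ) < 1 / ((n : ℝ) + 1) := by positivity
      have hn' : (n : ℝ) + 1 ≠ 0 := by positivity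
      beta_reduce
      rw [indicator_of_mem (by exact hx), abs_of_nonpos (by linarith : x - t ≤ 0),
        abs_of_nonpos (by linarith : x - (t + 1 / ((n : ℝ) + 1)) ≤ 0)]
      field_simp
      ring
    · have hev : ∀ᶠ n : ℕ in atTop, 1 / ((n : ℝ) + 1) < x - t :=
        tendsto_one_div_add_atTop_nhds_zero_nat.eventually_lt_const (by linarith)
      refine tendsto_const_nhds.congr' (hev.mono fun n hn0 => ?_)
      have hn' : (n : ℝ) + 1 ≠ 0 := by positivity
      beta_reduce
      rw [indicator_of_notMem (by simpa using hx), abs_of_pos (by linarith : 0 < x - t),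
        abs_of_pos (by linarith : 0 < x - (t + 1 / ((n : ℝ) + 1)))]
      field_simp
      ring

open MeasureTheory Filter Topology Set in
theorem aux_unique (μ ν : Measure ℝ) [IsFiniteMeasure μ] [IsFiniteMeasure ν]
    (hμ : Integrable (fun x : ℝ => x) μ) (hν : Integrable (fun x : ℝ => x) ν) (C₁ C₂ : ℝ)
    (h : ∀ t : ℝ, (∫ x, |x - t| ∂μ) + C₁ = (∫ x, |x - t| ∂ν) + C₂) : μ = ν := by
  have key : ∀ t, 2 * μ.real (Iic t) - μ.real univ = 2 * ν.real (Iic t) - ν.real univ := by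
    intro t
    refine tendsto_nhds_unique (aux_tendsto μ hμ t) ((aux_tendsto ν hν t).congr fun n => ?_)
    congr 1
    linarith [h t, h (t + 1 / ((n : ℝ) + 1))]
  refine Measure.ext_of_Ioc μ ν fun a b hab => ?_
  have hd : ∀ (ρ : Measure ℝ) [IsFiniteMeasure ρ],
      ρ.real (Ioc a b) = ρ.real (Iic b) - ρ.real (Iic a) := by
    intro ρ _
    rw [← Iic_sdiff_Iic, measureReal_sdiff (Iic_subset_Iic.2 hab.le) measurableSet_Iic]
  rw [← measureReal_eq_measureReal_iff, hd, hd]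
  linarith [key a, key b]

open MeasureTheory in

/-- If for some `u, v ∈ ℓ₁(Γ)` and constants `K, c ≥ 0` one has
`‖u − t v‖₁ = ∫_0^b |f(s) − t| ds + K + c|t|` for all `t ∈ ℝ`, then `f` is essentially
countably valued on `[0,b]`: it agrees a.e. on `[0,b]` with a function taking values
in a countable set. -/
theorem essentially_countably_valued_of_l1_norm_formula
    {Γ : Type*} (b : ℝ) (hb : 0 < b) (f : ℝ → ℝ)
    (hf : MeasureTheory.IntegrableOn f (Set.Icc 0 b) MeasureTheory.volume)
    (K c : ℝ) (hK : 0 ≤ K) (hc : 0 ≤ c)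
    (hexists : ∃ u v : lp (fun _ : Γ => ℝ) 1, ∀ t : ℝ,
      ‖u - t • v‖ = (∫ s in (0 : ℝ)..b, |f s - t|) + K + c * |t|) :
    ∃ D : Set ℝ, D.Countable ∧
      MeasureTheory.volume {s : ℝ | s ∈ Set.Icc 0 b ∧ f s ∉ D} = 0 := by

  classical
  obtain ⟨u, v, h⟩ := hexists
  have hsum : ∀ w : lp (fun _ : Γ => ℝ) 1, HasSum (fun i => |w i|) ‖w‖ := fun w => by
    simpa using lp.hasSum_norm (p := 1) (by simp) w
  set S : Set Γ := {i | v i ≠ 0} with hS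
  have hScount : S.Countable := by
    refine (hsum v).summable.countable_support.mono fun i hi => ?_
    simpa [hS] using hi
  have : Countable S := hScount.to_subtype
  let M : Measure ℝ := Measure.sum fun i : S => ENNReal.ofReal |v i| • Measure.dirac (u i / v i)
  have hcalc : ∀ (t : ℝ) (i : S), |v i| * |u i / v i - t| = |u i - t * v i| := by
    intro t i
    have hi : v i ≠ 0 := i.2
    rw [← abs_mul]
    congr 1
    field_simp
  have hsumt : ∀ t : ℝ, Summable fun i : Γ => |u i - t * v i| := fun t => by
    exact (hsum (u - t • v)).summable
  have hnorm : ∀ t : ℝ, ‖u - t • v‖ = (∫ x, |x - t| ∂M) + ∑' i : (Sᶜ : Set Γ), |u i| := by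
    intro t
    have e1 : ‖u - t • v‖ = ∑' i, |u i - t * v i| := by
      exact (hsum (u - t • v)).tsum_eq.symm
    have e2 : ∫ x, |x - t| ∂M = ∑' i : S, |u i - t * v i| := by
      rw [integral_sum_dirac (fun _ => ENNReal.ofReal_ne_top)]
      refine tsum_congr fun i => ?_
      rw [ENNReal.toReal_ofReal (abs_nonneg _), smul_eq_mul, hcalc]
    have e3 : ∑' i : (Sᶜ : Set Γ), |u i| = ∑' i : (Sᶜ : Set Γ), |u i - t * v i| := by
      refine tsum_congr fun i => ?_
      have hi : v i = 0 := by
        by_contra hne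
        exact i.2 hne
      simp [hi]
    rw [e1, e2, e3]
    exact ((hsumt t).subtype S |>.tsum_add_tsum_compl ((hsumt t).subtype Sᶜ)).symm
  have hMfin : IsFiniteMeasure M := by
    refine ⟨?_⟩
    rw [Measure.sum_apply _ MeasurableSet.univ]
    have hlt := ((hsum v).summable.subtype S).tsum_ofReal_lt_top
    simp only [Measure.smul_apply, measure_univ, smul_eq_mul, mul_one]
    exact hlt
  have hMint : Integrable (fun x : ℝ => x) M := by
    refine integrable_sum_dirac (fun _ => ENNReal.ofReal_ne_top) ?_
    refine ((hsum u).summable.subtype S).congr fun i => ?_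
    rw [ENNReal.toReal_ofReal (abs_nonneg _), Real.norm_eq_abs]
    simpa using (hcalc 0 i).symm
  let N₀ : Measure ℝ := Measure.map f (volume.restrict (Set.Icc 0 b))
  let N : Measure ℝ := N₀ + ENNReal.ofReal c • Measure.dirac 0
  have hfm : AEMeasurable f (volume.restrict (Set.Icc 0 b)) := hf.aestronglyMeasurable.aemeasurable
  have : IsFiniteMeasure N₀ := by
    dsimp only [N₀]; infer_instance
  have hd : IsFiniteMeasure (ENNReal.ofReal c • Measure.dirac (0 : ℝ)) :=
    Measure.smul_finite _ ENNReal.ofReal_ne_top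
  have hdi : ∀ g : ℝ → ℝ, Integrable g (ENNReal.ofReal c • Measure.dirac (0 : ℝ)) := fun g =>
    (integrable_dirac (by simp)).smul_measure ENNReal.ofReal_ne_top
  have hN₀int : Integrable (fun x : ℝ => x) N₀ :=
    (integrable_map_measure (by fun_prop) hfm).2 hf
  have hNint : Integrable (fun x : ℝ => x) N := hN₀int.add_measure (hdi _)
  have hNval : ∀ t : ℝ, ∫ x, |x - t| ∂N = (∫ s in (0 : ℝ)..b, |f s - t|) + c * |t| := by
    intro t
    have hi : Integrable (fun x : ℝ => |x - t|) N₀ := (hN₀int.sub (integrable_const t)).abs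
    rw [integral_add_measure hi (hdi _),
      integral_map hfm (by fun_prop), intervalIntegral.integral_of_le hb.le,
      integral_Icc_eq_integral_Ioc, integral_smul_measure, integral_dirac]
    simp [ENNReal.toReal_ofReal hc]
  have hMN : M = N := by
    refine aux_unique M N hMint hNint (∑' i : (Sᶜ : Set Γ), |u i|) K fun t => ?_
    rw [hNval, ← hnorm, h t]
    ring
  let D : Set ℝ := Set.range fun i : S => u i / v i
  have hD : D.Countable := Set.countable_range _
  refine ⟨D, hD, ?_⟩
  have hM0 : M Dᶜ = 0 := by
    rw [Measure.sum_apply _ hD.measurableSet.compl, ENNReal.tsum_eq_zero]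
    intro i
    have : u i / v i ∈ D := ⟨i, rfl⟩
    simp [Measure.dirac_apply' _ hD.measurableSet.compl, this]
  have hN0 : N₀ Dᶜ = 0 := by
    rw [hMN] at hM0
    exact le_antisymm (hM0 ▸ (Measure.le_add_right le_rfl : N₀ ≤ N) _) zero_le
  rw [Measure.map_apply_of_aemeasurable hfm hD.measurableSet.compl,
    Measure.restrict_apply' measurableSet_Icc] at hN0
  refine measure_mono_null (fun s hs => ?_) hN0
  exact ⟨hs.2, hs.1⟩
end

section
/- Let L > 0, let (rₙ)_{n∈ℕ} be a sequence in the open interval (0, L), let (cₙ)_{n∈ℕ} be strictly positive reals with Σₙ cₙ < ∞, and define f : ℝ → ℝ by f(s) = Σ_{n : s ≤ rₙ} cₙ. If the closure of the set {rₙ : n ∈ ℕ} has positive Lebesgue measure, then f is not essentially countably valued on [0, L]: for every countable set D ⊆ ℝ one has λ({s ∈ [0, L] : f(s) ∉ D}) > 0. Equivalently, the push-forward by f of the Lebesgue measure on [0, L] is not a discrete measure. -/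
/-- Let `L > 0`, `(rₙ) ⊆ (0, L)`, `(cₙ)` strictly positive summable reals, and
`f(s) = Σ_{n : s ≤ rₙ} cₙ`. If the closure of `{rₙ}` has positive Lebesgue measure, then
`f` is not essentially countably valued on `[0, L]`; equivalently, the push-forward of
Lebesgue measure on `[0, L]` by `f` is not discrete. -/
theorem not_essentially_countably_valued_of_closure_pos_measure
    (L : ℝ) (hL : 0 < L)
    (r : ℕ → ℝ) (hr : ∀ n, r n ∈ Set.Ioo 0 L)
    (c : ℕ → ℝ) (hc : ∀ n, 0 < c n) (hsum : Summable c)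
    (f : ℝ → ℝ) (hf : ∀ s, f s = ∑' n, if s ≤ r n then c n else 0)
    (hcl : 0 < MeasureTheory.volume (closure (Set.range r))) :
    ∀ D : Set ℝ, D.Countable →
      0 < MeasureTheory.volume {s : ℝ | s ∈ Set.Icc 0 L ∧ f s ∉ D} := by
  intro D hD
  set K := closure (Set.range r) with hK
  have hKL : K ⊆ Set.Icc 0 L := by
    apply closure_minimal _ isClosed_Icc
    rintro _ ⟨n, rfl⟩
    exact ⟨(hr n).1.le, (hr n).2.le⟩
  have hsm : ∀ s, Summable (fun n => if s ≤ r n then c n else 0) := by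
    intro s
    refine Summable.of_nonneg_of_le (fun n => ?_) (fun n => ?_) hsum
    · split_ifs
      · exact (hc n).le
      · exact le_rfl
    · split_ifs
      · exact le_rfl
      · exact (hc n).le
  -- three distinct points of the closure cannot share a value
  have key : ∀ a m b, m ∈ K → a < m → m < b → f a ≠ f b := by
    intro a m b hm ham hmb
    obtain ⟨_, hn, n, rfl⟩ := mem_closure_iff.1 hm (Set.Ioo a b) isOpen_Ioo ⟨ham, hmb⟩
    apply ne_of_gt
    rw [hf a, hf b]
    refine Summable.tsum_lt_tsum (i := n) (fun k => ?_) ?_ (hsm b) (hsm a)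
    · have := (hc k).le
      split_ifs <;> linarith
    · rw [if_neg (not_le.2 hn.2), if_pos hn.1.le]
      exact hc n
  have hfin : ∀ d, (K ∩ f ⁻¹' {d}).Countable := by
    intro d
    rcases (K ∩ f ⁻¹' {d}).eq_empty_or_nonempty with h | ⟨x, hx⟩
    · rw [h]; exact Set.countable_empty
    have h1 : ((K ∩ f ⁻¹' {d}) ∩ Set.Ioi x).Subsingleton := by
      rintro y ⟨hy, hxy⟩ z ⟨hz, hxz⟩
      rcases lt_trichotomy y z with h | h | h
      · exact absurd (hx.2.trans hz.2.symm) (key x y z hy.1 hxy h)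
      · exact h
      · exact absurd (hx.2.trans hy.2.symm) (key x z y hz.1 hxz h)
    have h2 : ((K ∩ f ⁻¹' {d}) ∩ Set.Iio x).Subsingleton := by
      rintro y ⟨hy, hxy⟩ z ⟨hz, hxz⟩
      rcases lt_trichotomy y z with h | h | h
      · exact absurd (hy.2.trans hx.2.symm) (key y z x hz.1 h hxz)
      · exact h
      · exact absurd (hz.2.trans hx.2.symm) (key z y x hy.1 h hxy)
    refine ((h1.finite.countable.union h2.finite.countable).union
      (Set.countable_singleton x)).mono ?_
    intro y hy
    rcases lt_trichotomy y x with h | h | h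
    · exact Or.inl (Or.inr ⟨hy, h⟩)
    · exact Or.inr h
    · exact Or.inl (Or.inl ⟨hy, h⟩)
  have hnull : MeasureTheory.volume (⋃ d ∈ D, (K ∩ f ⁻¹' {d})) = 0 :=
    (hD.biUnion fun d _ => hfin d).measure_zero _
  refine lt_of_lt_of_le hcl ?_
  calc MeasureTheory.volume K
      ≤ MeasureTheory.volume
          ({s : ℝ | s ∈ Set.Icc 0 L ∧ f s ∉ D} ∪ ⋃ d ∈ D, (K ∩ f ⁻¹' {d})) := by
        apply MeasureTheory.measure_mono
        intro s hs
        by_cases h : f s ∈ D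
        · exact Or.inr (Set.mem_biUnion h ⟨hs, rfl⟩)
        · exact Or.inl ⟨hKL hs, h⟩
    _ ≤ _ := MeasureTheory.measure_union_le _ _
    _ = _ := by rw [hnull, add_zero]
end

section
/- Let M ⊆ ℝ be a closed set with Lebesgue measure zero, let x, y ∈ M with x < y, and let ε > 0. Then there exists a function f : ℝ → ℝ with Lipschitz constant at most 1 such that: (a) f(y) − f(x) ≥ (y − x) − ε; (b) f is constant on (−∞, x] and constant on [y, ∞); and (c) the restriction of f to M is locally constant, i.e. for every p ∈ M there exists δ > 0 such that f(q) = f(p) for all q ∈ M with |q − p| < δ. -/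
/-- For a closed Lebesgue-null set `M ⊆ ℝ`, points `x < y` in `M`, and `ε > 0`, there is a
1-Lipschitz function `f : ℝ → ℝ` with `f(y) − f(x) ≥ (y − x) − ε` which is constant on
`(−∞, x]`, constant on `[y, ∞)`, and locally constant on `M`. -/
theorem exists_lipschitz_locallyConstant_separating
    (M : Set ℝ) (hMc : IsClosed M) (hM0 : MeasureTheory.volume M = 0)
    (x y : ℝ) (hx : x ∈ M) (hy : y ∈ M) (hxy : x < y) (ε : ℝ) (hε : 0 < ε) :
    ∃ f : ℝ → ℝ, LipschitzWith 1 f ∧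
      f y - f x ≥ (y - x) - ε ∧
      (∀ s ∈ Set.Iic x, f s = f x) ∧
      (∀ s ∈ Set.Ici y, f s = f y) ∧
      (∀ p ∈ M, ∃ δ > (0 : ℝ), ∀ q ∈ M, |q - p| < δ → f q = f p) := by
  obtain ⟨U, hMU, hUo, hUm⟩ := M.exists_isOpen_lt_of_lt (ENNReal.ofReal ε)
    (by rw [hM0]; exact ENNReal.ofReal_pos.mpr hε)
  have hSm : MeasurableSet (Set.Ioc x y \ U) := measurableSet_Ioc.diff hUo.measurableSet
  have hSf : MeasureTheory.volume (Set.Ioc x y \ U) ≠ ⊤ :=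
    ne_top_of_le_ne_top (by simp) (MeasureTheory.measure_mono Set.diff_subset)
  obtain ⟨S, hS⟩ : ∃ S, S = Set.Ioc x y \ U := ⟨_, rfl⟩
  rw [← hS] at hSm hSf
  have hfin : ∀ A : Set ℝ, MeasureTheory.volume (S ∩ A) ≠ ⊤ := fun A =>
    ne_top_of_le_ne_top hSf (MeasureTheory.measure_mono Set.inter_subset_left)
  let f : ℝ → ℝ := fun t => MeasureTheory.volume.real (S ∩ Set.Iic t)
  have key : ∀ s t, s ≤ t → f t = f s + MeasureTheory.volume.real (S ∩ Set.Ioc s t) := by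
    intro s t hst
    change MeasureTheory.volume.real _ = MeasureTheory.volume.real _ + _
    rw [← MeasureTheory.measureReal_union _ (hSm.inter measurableSet_Ioc) (hfin _) (hfin _),
      ← Set.inter_union_distrib_left, Set.Iic_union_Ioc_eq_Iic hst]
    rw [Set.disjoint_left]
    rintro a ⟨_, h1⟩ ⟨_, h2⟩
    exact absurd h1 (not_le.mpr h2.1)
  have hconst : ∀ s t, s ≤ t → S ∩ Set.Ioc s t = ∅ → f t = f s := by
    intro s t hst h
    rw [key s t hst, h]; simp
  have hle : ∀ s t, s ≤ t → |f t - f s| ≤ t - s := by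
    intro s t hst
    rw [key s t hst, add_sub_cancel_left, abs_of_nonneg MeasureTheory.measureReal_nonneg]
    calc MeasureTheory.volume.real (S ∩ Set.Ioc s t)
        ≤ MeasureTheory.volume.real (Set.Ioc s t) :=
          MeasureTheory.measureReal_mono Set.inter_subset_right (by simp)
      _ = t - s := by simp [hst]
  refine ⟨f, ?_, ?_, ?_, ?_, ?_⟩
  · refine LipschitzWith.of_dist_le_mul fun s t => ?_
    rw [NNReal.coe_one, one_mul, Real.dist_eq, Real.dist_eq]
    rcases le_total s t with h | h
    · rw [abs_sub_comm, abs_sub_comm s t]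
      exact (hle s t h).trans (le_abs_self _)
    · exact (hle t s h).trans (le_abs_self _)
  · have h1 : S ∩ Set.Ioc x y = S :=
      Set.inter_eq_left.mpr (by rw [hS]; exact Set.diff_subset)
    rw [key x y hxy.le, h1, add_sub_cancel_left]
    have hUf : MeasureTheory.volume U ≠ ⊤ := hUm.ne_top
    have h2 : MeasureTheory.volume.real U ≤ ε := ENNReal.toReal_le_of_le_ofReal hε.le hUm.le
    have h3 : MeasureTheory.volume.real (Set.Ioc x y) ≤ MeasureTheory.volume.real (S ∪ U) := by
      refine MeasureTheory.measureReal_mono ?_ (MeasureTheory.measure_union_ne_top hSf hUf)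
      rw [hS, Set.diff_union_self]
      exact Set.subset_union_left
    have h4 := MeasureTheory.measureReal_union_le (μ := MeasureTheory.volume) S U
    have h5 : MeasureTheory.volume.real (Set.Ioc x y) = y - x := by simp [hxy.le]
    linarith
  · intro s hs
    refine (hconst s x hs ?_).symm
    ext a
    simp only [hS, Set.mem_inter_iff, Set.mem_diff, Set.mem_Ioc, Set.mem_empty_iff_false, iff_false]
    rintro ⟨⟨⟨h1, _⟩, _⟩, _, h2⟩
    linarith
  · intro s hs
    refine hconst y s hs ?_
    ext a
    simp only [hS, Set.mem_inter_iff, Set.mem_diff, Set.mem_Ioc, Set.mem_empty_iff_false, iff_false]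
    rintro ⟨⟨⟨_, h1⟩, _⟩, h2, _⟩
    linarith
  · intro p hp
    obtain ⟨δ, hδ, hb⟩ := Metric.isOpen_iff.mp hUo p (hMU hp)
    refine ⟨δ, hδ, fun q _ hqp => ?_⟩
    rw [abs_lt] at hqp
    have hE : ∀ s t, p - δ < s → t < p + δ → S ∩ Set.Ioc s t = ∅ := by
      intro s t h1 h2
      ext a
      simp only [hS, Set.mem_inter_iff, Set.mem_diff, Set.mem_Ioc, Set.mem_empty_iff_false,
        iff_false]
      rintro ⟨⟨_, h3⟩, h4, h5⟩
      apply h3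
      apply hb
      rw [Metric.mem_ball, Real.dist_eq, abs_lt]
      constructor <;> linarith
    rcases le_total q p with h | h
    · exact (hconst q p h (hE q p (by linarith) (by linarith))).symm
    · exact hconst p q h (hE p q (by linarith) (by linarith))
end
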